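/- Let ρ be a density matrix and σ a positive semi-definite matrix on a finite-dimensional complex Hilbert space with supp ρ = supp σ. Then the limit inferior, as α → 0 through α ∈ (0,1), of the quantum Rényi divergence D_α(ρ||σ) is at least −log(tr σ), and hence at least D̃_0(ρ||σ). -/

import Mathlib

/-!
The divergence in fact converges to `- log (tr σ)` as `α → 0`. Since `ρ` and `σ` have the same
support, there are constants `c, C > 0` with `c σ ≤ ρ ≤ C σ` (`exists_le_smul_of_msupp_le`).
Conjugating by `σ ^ s`, `s = (1 - α) / (2 α)`, and applying operator monotonicity of
`x ↦ x ^ α` for `α ∈ (0, 1)` gives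
`c ^ α σ ≤ (σ ^ s ρ σ ^ s) ^ α ≤ C ^ α σ`, because `α (1 + 2 s) = 1` (`sandwich_self`). Taking
traces, the trace inside the logarithm is squeezed between `c ^ α tr σ` and `C ^ α tr σ`, both of
which tend to `tr σ > 0` (`tendsto_renyiDiv`).

Finally `Π_ρ σ = σ` by equality of the supports, so `D̃₀(ρ‖σ) = - log (tr σ)` and the second bound
coincides with the first. Convergence, rather than only a lower bound, also ensures that the real
`liminf` is not a junk value.
-/

open Matrix Filter ComplexOrder

/-- Real power with the convention `0 ^ t = 0` for every `t` (powers taken on the support). -/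
noncomputable def rpow0 (x t : ℝ) : ℝ := if x = 0 then 0 else Real.rpow x t

/-- Power of a positive semi-definite (more generally, Hermitian) matrix via the functional
calculus, with the convention `0 ^ t = 0` on the kernel (i.e. powers are taken on the support).
Junk value `0` if the matrix is not Hermitian. -/
noncomputable def mpow {m : ℕ} (M : Matrix (Fin m) (Fin m) ℂ) (t : ℝ) :
    Matrix (Fin m) (Fin m) ℂ :=
  if hM : M.IsHermitian then hM.cfc (fun x => rpow0 x t) else 0

/-- The orthogonal projection onto the support of a positive semi-definite (more generally,
Hermitian) matrix, via the functional calculus. Junk value `0` if the matrix is not Hermitian. -/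
noncomputable def suppProj {m : ℕ} (M : Matrix (Fin m) (Fin m) ℂ) :
    Matrix (Fin m) (Fin m) ℂ :=
  if hM : M.IsHermitian then hM.cfc (fun x => if x = 0 then 0 else 1) else 0

/-- The support (column space) of a matrix. -/
noncomputable def msupp {m : ℕ} (M : Matrix (Fin m) (Fin m) ℂ) : Submodule ℂ (Fin m → ℂ) :=
  LinearMap.range M.mulVecLin


/-- The quantum Rényi divergence `D_α(ρ‖σ)`. -/
noncomputable def renyiDiv {n : ℕ} (ρ σ : Matrix (Fin n) (Fin n) ℂ) (α : ℝ) : ℝ :=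
  (α - 1)⁻¹ * Real.log
    ((mpow (mpow σ ((1 - α) / (2 * α)) * ρ * mpow σ ((1 - α) / (2 * α))) α).trace.re)

/-- The `0`-relative Rényi entropy `D̃₀(ρ‖σ) = - log tr(Π_ρ σ)`. -/
noncomputable def relRenyi0 {n : ℕ} (ρ σ : Matrix (Fin n) (Fin n) ℂ) : ℝ :=
  - Real.log ((suppProj ρ * σ).trace.re)

section

open scoped MatrixOrder Matrix.Norms.L2Operator

variable {n : ℕ}

/-- Every function is continuous on the (finite) spectrum of a matrix. -/
lemma continuousOn_spectrum (A : Matrix (Fin n) (Fin n) ℂ) (f : ℝ → ℝ) :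
    ContinuousOn f (spectrum ℝ A) :=
  (Matrix.finite_real_spectrum (A := A)).continuousOn f

lemma mpow_eq_cfc {A : Matrix (Fin n) (Fin n) ℂ} (hA : A.IsHermitian) (t : ℝ) :
    mpow A t = cfc (fun x => rpow0 x t) A := by
  rw [mpow, dif_pos hA, hA.cfc_eq]

lemma suppProj_eq_cfc {A : Matrix (Fin n) (Fin n) ℂ} (hA : A.IsHermitian) :
    suppProj A = cfc (fun x : ℝ => if x = 0 then 0 else 1) A := by
  rw [suppProj, dif_pos hA, hA.cfc_eq]

lemma mpow_isHermitian {A : Matrix (Fin n) (Fin n) ℂ} (hA : A.IsHermitian) (t : ℝ) :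
    (mpow A t).IsHermitian := by
  rw [mpow_eq_cfc hA]
  exact cfc_predicate (p := IsSelfAdjoint) _ A

lemma suppProj_isHermitian {A : Matrix (Fin n) (Fin n) ℂ} (hA : A.IsHermitian) :
    (suppProj A).IsHermitian := by
  rw [suppProj_eq_cfc hA]
  exact cfc_predicate (p := IsSelfAdjoint) _ A

lemma mpow_eq_rpow {A : Matrix (Fin n) (Fin n) ℂ} (hA : 0 ≤ A) {t : ℝ} (ht : 0 < t) :
    mpow A t = A ^ t := by
  rw [mpow_eq_cfc (Matrix.nonneg_iff_posSemidef.1 hA).isHermitian, CFC.rpow_eq_cfc_real hA]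
  refine cfc_congr fun x _ => ?_
  by_cases hx : x = 0
  · simp [rpow0, hx, Real.zero_rpow ht.ne']
  · simp [rpow0, hx]

lemma suppProj_mul_self {A : Matrix (Fin n) (Fin n) ℂ} (hA : A.IsHermitian) :
    suppProj A * A = A := by
  have hA' : IsSelfAdjoint A := hA
  rw [suppProj_eq_cfc hA]
  nth_rewrite 2 [← cfc_id' ℝ A hA']
  rw [← cfc_mul _ _ A (continuousOn_spectrum _ _) (continuousOn_spectrum _ _)]
  conv_rhs => rw [← cfc_id' ℝ A hA']
  refine cfc_congr fun x _ => ?_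
  by_cases hx : x = 0 <;> simp [hx]

lemma suppProj_mul_of_msupp_le {A B : Matrix (Fin n) (Fin n) ℂ} (hA : A.IsHermitian)
    (h : msupp B ≤ msupp A) : suppProj A * B = B := by
  apply Matrix.toLin'.injective
  refine LinearMap.ext fun v => ?_
  obtain ⟨w, hw⟩ := h ⟨v, rfl⟩
  simp only [Matrix.mulVecLin_apply] at hw
  simp only [Matrix.toLin'_apply, ← Matrix.mulVec_mulVec]
  rw [← hw, Matrix.mulVec_mulVec, suppProj_mul_self hA]

lemma mpow_half_mul_self {A : Matrix (Fin n) (Fin n) ℂ} (hA : A.PosSemidef) :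
    mpow A (1 / 2) * mpow A (1 / 2) = A := by
  have hA' : IsSelfAdjoint A := hA.isHermitian
  rw [mpow_eq_cfc hA.isHermitian,
    ← cfc_mul _ _ A (continuousOn_spectrum _ _) (continuousOn_spectrum _ _)]
  conv_rhs => rw [← cfc_id' ℝ A hA']
  refine cfc_congr fun x hx => ?_
  have hx0 : 0 ≤ x := spectrum_nonneg_of_nonneg (Matrix.nonneg_iff_posSemidef.2 hA) hx
  by_cases h : x = 0
  · simp [rpow0, h]
  · have : x ^ (1 / 2 : ℝ) * x ^ (1 / 2 : ℝ) = x := by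
      rw [← Real.rpow_add (lt_of_le_of_ne hx0 (Ne.symm h))]; norm_num
    simpa [rpow0, h] using this

lemma mpow_half_mul_neg_half {A : Matrix (Fin n) (Fin n) ℂ} (hA : A.PosSemidef) :
    mpow A (1 / 2) * mpow A (-(1 / 2)) = suppProj A := by
  rw [mpow_eq_cfc hA.isHermitian, mpow_eq_cfc hA.isHermitian, suppProj_eq_cfc hA.isHermitian,
    ← cfc_mul _ _ A (continuousOn_spectrum _ _) (continuousOn_spectrum _ _)]
  refine cfc_congr fun x hx => ?_
  have hx0 : 0 ≤ x := spectrum_nonneg_of_nonneg (Matrix.nonneg_iff_posSemidef.2 hA) hx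
  by_cases h : x = 0
  · simp [rpow0, h]
  · have : x ^ (1 / 2 : ℝ) * x ^ (-(1 / 2) : ℝ) = 1 := by
      rw [← Real.rpow_add (lt_of_le_of_ne hx0 (Ne.symm h))]; norm_num
    simpa [rpow0, h] using this

/-- Inclusion of supports gives domination up to a constant: with `S = A ^ (1/2)` and
`T = A ^ (-1/2)` its pseudo-inverse, `B = S (T B T) S ≤ ‖T B T‖ A`. -/
lemma exists_le_smul_of_msupp_le {A B : Matrix (Fin n) (Fin n) ℂ} (hA : A.PosSemidef)
    (hB : B.PosSemidef) (h : msupp B ≤ msupp A) : ∃ C : ℝ, 0 < C ∧ B ≤ C • A := by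
  set S := mpow A (1 / 2) with hS
  set T := mpow A (-(1 / 2)) with hT
  have hSsa : star S = S := mpow_isHermitian hA.isHermitian _
  have hTsa : star T = T := mpow_isHermitian hA.isHermitian _
  have hBsa : star B = B := hB.isHermitian
  have hST : S * T = suppProj A := mpow_half_mul_neg_half hA
  have hTS : T * S = suppProj A := by
    have := congrArg star hST
    rw [star_mul, hSsa, hTsa] at this
    rw [this]
    exact suppProj_isHermitian hA.isHermitian
  have h1 : suppProj A * B = B := suppProj_mul_of_msupp_le hA.isHermitian h
  have h2 : B * suppProj A = B := by
    have := congrArg star h1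
    rw [star_mul, hBsa] at this
    rwa [show star (suppProj A) = suppProj A from suppProj_isHermitian hA.isHermitian] at this
  have hmid : IsSelfAdjoint (T * B * T) := by
    rw [isSelfAdjoint_iff, star_mul, star_mul, hTsa, hBsa, mul_assoc]
  have hle := CStarAlgebra.star_left_conjugate_le_norm_smul (a := S) (b := T * B * T) hmid
  have e1 : star S * (T * B * T) * S = B := by
    rw [hSsa]
    calc S * (T * B * T) * S = (S * T) * B * (T * S) := by simp only [mul_assoc]
      _ = B := by rw [hST, hTS, h1, h2]
  rw [e1, hSsa, mpow_half_mul_self hA] at hle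
  refine ⟨‖T * B * T‖ + 1, by positivity, hle.trans ?_⟩
  have hA0 : 0 ≤ A := Matrix.nonneg_iff_posSemidef.2 hA
  rw [add_smul, one_smul]
  exact le_add_of_nonneg_right hA0

/-- The exponents `(1 - α) / (2 α)` are chosen so that replacing `ρ` by a multiple of `σ` in the
Rényi functional returns a multiple of `σ` itself: `α (1 + 2 · (1 - α) / (2 α)) = 1`. -/
lemma sandwich_self {A : Matrix (Fin n) (Fin n) ℂ} (hA : 0 ≤ A) {c α : ℝ} (hc : 0 < c)
    (hα : α ∈ Set.Ioo (0 : ℝ) 1) :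
    (mpow A ((1 - α) / (2 * α)) * (c • A) * mpow A ((1 - α) / (2 * α))) ^ α = c ^ α • A := by
  obtain ⟨hα0, hα1⟩ := hα
  set s := (1 - α) / (2 * α) with hs
  have hPS := Matrix.nonneg_iff_posSemidef.1 hA
  have hA' : IsSelfAdjoint A := hPS.isHermitian
  have key : mpow A s * (c • A) * mpow A s
      = cfc (fun x => rpow0 x s * (c * x) * rpow0 x s) A := by
    rw [cfc_mul _ _ A (continuousOn_spectrum _ _) (continuousOn_spectrum _ _),
      cfc_mul _ _ A (continuousOn_spectrum _ _) (continuousOn_spectrum _ _),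
      cfc_const_mul c _ A (continuousOn_spectrum _ _), cfc_id' ℝ A hA',
      mpow_eq_cfc hPS.isHermitian]
  have hnn : 0 ≤ mpow A s * (c • A) * mpow A s := by
    have := star_left_conjugate_nonneg (smul_nonneg hc.le hA : 0 ≤ c • A) (mpow A s)
    rwa [show star (mpow A s) = mpow A s from mpow_isHermitian hPS.isHermitian s] at this
  rw [CFC.rpow_eq_cfc_real hnn, key,
    ← cfc_comp' (fun x : ℝ => x ^ α) _ A
      (((Matrix.finite_real_spectrum (A := A)).image _).continuousOn _)
      (continuousOn_spectrum _ _) hA']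
  conv_rhs => rw [← cfc_id' ℝ A hA', ← cfc_const_mul _ _ A (continuousOn_spectrum _ _)]
  refine cfc_congr fun x hx => ?_
  have hx0 : 0 ≤ x := spectrum_nonneg_of_nonneg hA hx
  by_cases h : x = 0
  · simp [rpow0, h, Real.zero_rpow hα0.ne']
  · have hpos : 0 < x := lt_of_le_of_ne hx0 (Ne.symm h)
    have e : x ^ s * (c * x) * x ^ s = c * x ^ (s + 1 + s) := by
      rw [Real.rpow_add hpos, Real.rpow_add hpos, Real.rpow_one]; ring
    have e2 : (s + 1 + s) * α = 1 := by rw [hs]; field_simp; ring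
    have : (x ^ s * (c * x) * x ^ s) ^ α = c ^ α * x := by
      rw [e, Real.mul_rpow hc.le (Real.rpow_nonneg hx0 _), ← Real.rpow_mul hx0, e2, Real.rpow_one]
    simpa [rpow0, h] using this

lemma trace_re_mono {A B : Matrix (Fin n) (Fin n) ℂ} (h : A ≤ B) :
    A.trace.re ≤ B.trace.re := by
  have := (Matrix.le_iff.1 h).trace_nonneg
  rw [Matrix.trace_sub, Complex.nonneg_iff] at this
  simpa using this.1

lemma trace_re_smul (c : ℝ) (A : Matrix (Fin n) (Fin n) ℂ) :
    (c • A).trace.re = c * A.trace.re := by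
  simp [Matrix.trace_smul]

/-- The trace inside the logarithm of `renyiDiv ρ σ α`. -/
noncomputable def renyiTrace (ρ σ : Matrix (Fin n) (Fin n) ℂ) (α : ℝ) : ℝ :=
  (mpow (mpow σ ((1 - α) / (2 * α)) * ρ * mpow σ ((1 - α) / (2 * α))) α).trace.re

lemma sandwich_mono {ρ τ σ : Matrix (Fin n) (Fin n) ℂ} (hσ : 0 ≤ σ) (h : ρ ≤ τ) (s : ℝ) :
    mpow σ s * ρ * mpow σ s ≤ mpow σ s * τ * mpow σ s := by
  have hPS := Matrix.nonneg_iff_posSemidef.1 hσ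
  exact IsSelfAdjoint.conjugate_le_conjugate h (mpow_isHermitian hPS.isHermitian s)

lemma renyiTrace_eq {ρ σ : Matrix (Fin n) (Fin n) ℂ} (hρ : 0 ≤ ρ) (hσ : 0 ≤ σ) {α : ℝ}
    (hα : α ∈ Set.Ioo (0 : ℝ) 1) :
    renyiTrace ρ σ α =
      ((mpow σ ((1 - α) / (2 * α)) * ρ * mpow σ ((1 - α) / (2 * α))) ^ α).trace.re := by
  have h := sandwich_mono hσ hρ ((1 - α) / (2 * α))
  rw [mul_zero, zero_mul] at h
  rw [renyiTrace, mpow_eq_rpow h hα.1]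

lemma renyiTrace_le {ρ σ : Matrix (Fin n) (Fin n) ℂ} (hρ : 0 ≤ ρ) (hσ : 0 ≤ σ) {C : ℝ}
    (hC : 0 < C) (h : ρ ≤ C • σ) {α : ℝ} (hα : α ∈ Set.Ioo (0 : ℝ) 1) :
    renyiTrace ρ σ α ≤ C ^ α * σ.trace.re := by
  rw [renyiTrace_eq hρ hσ hα, ← trace_re_smul, ← sandwich_self hσ hC hα]
  exact trace_re_mono (CFC.rpow_le_rpow ⟨hα.1.le, hα.2.le⟩ (sandwich_mono hσ h _))

lemma le_renyiTrace {ρ σ : Matrix (Fin n) (Fin n) ℂ} (hρ : 0 ≤ ρ) (hσ : 0 ≤ σ) {c : ℝ}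
    (hc : 0 < c) (h : c • σ ≤ ρ) {α : ℝ} (hα : α ∈ Set.Ioo (0 : ℝ) 1) :
    c ^ α * σ.trace.re ≤ renyiTrace ρ σ α := by
  rw [renyiTrace_eq hρ hσ hα, ← trace_re_smul, ← sandwich_self hσ hc hα]
  exact trace_re_mono (CFC.rpow_le_rpow ⟨hα.1.le, hα.2.le⟩ (sandwich_mono hσ h _))

/-- With equal supports the Rényi divergence converges to `- log (tr σ)` as `α → 0`. -/
lemma tendsto_renyiDiv (ρ σ : Matrix (Fin n) (Fin n) ℂ)
    (hρ : ρ.PosSemidef) (hρtr : ρ.trace = 1) (hσ : σ.PosSemidef)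
    (hsupp : msupp ρ = msupp σ) :
    Tendsto (fun α : ℝ => renyiDiv ρ σ α) (nhdsWithin (0 : ℝ) (Set.Ioo (0 : ℝ) 1))
      (nhds (- Real.log (σ.trace.re))) := by
  have hρ0 : 0 ≤ ρ := Matrix.nonneg_iff_posSemidef.2 hρ
  have hσ0 : 0 ≤ σ := Matrix.nonneg_iff_posSemidef.2 hσ
  obtain ⟨C, hC, hle⟩ := exists_le_smul_of_msupp_le hσ hρ hsupp.le
  obtain ⟨D, hD, hge⟩ := exists_le_smul_of_msupp_le hρ hσ hsupp.ge
  have hge' : D⁻¹ • σ ≤ ρ := by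
    have := smul_le_smul_of_nonneg_left hge (inv_nonneg.2 hD.le)
    rwa [smul_smul, inv_mul_cancel₀ hD.ne', one_smul] at this
  have htr : 0 < σ.trace.re := by
    have := trace_re_mono hle
    rw [hρtr, trace_re_smul, Complex.one_re] at this
    by_contra hneg
    nlinarith [mul_nonneg hC.le (neg_nonneg.2 (not_lt.1 hneg))]
  have hpow : ∀ c : ℝ, 0 < c → Tendsto (fun α : ℝ => c ^ α * σ.trace.re)
      (nhdsWithin (0 : ℝ) (Set.Ioo (0 : ℝ) 1)) (nhds σ.trace.re) := by
    intro c hc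
    have h1 : Tendsto (fun α : ℝ => c ^ α * σ.trace.re) (nhds 0)
        (nhds (c ^ (0 : ℝ) * σ.trace.re)) :=
      ((Real.continuous_const_rpow hc.ne').tendsto 0).mul_const _
    rw [Real.rpow_zero, one_mul] at h1
    exact h1.mono_left nhdsWithin_le_nhds
  have hmem : ∀ᶠ α in nhdsWithin (0 : ℝ) (Set.Ioo (0 : ℝ) 1), α ∈ Set.Ioo (0 : ℝ) 1 :=
    self_mem_nhdsWithin
  have hlim : Tendsto (renyiTrace ρ σ) (nhdsWithin (0 : ℝ) (Set.Ioo (0 : ℝ) 1))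
      (nhds σ.trace.re) :=
    tendsto_of_tendsto_of_tendsto_of_le_of_le' (hpow _ (inv_pos.2 hD)) (hpow C hC)
      (hmem.mono fun α hα => le_renyiTrace hρ0 hσ0 (inv_pos.2 hD) hge' hα)
      (hmem.mono fun α hα => renyiTrace_le hρ0 hσ0 hC hle hα)
  have hcoef : Tendsto (fun α : ℝ => (α - 1)⁻¹) (nhdsWithin (0 : ℝ) (Set.Ioo (0 : ℝ) 1))
      (nhds ((0 - 1)⁻¹)) :=
    (((continuous_id.sub continuous_const).tendsto (0 : ℝ)).inv₀ (by norm_num)).mono_left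
      nhdsWithin_le_nhds
  have := hcoef.mul (hlim.log htr.ne')
  convert this using 2
  · rfl
  · norm_num

end

/-- If `ρ` is a density matrix and `σ` positive semi-definite with `supp ρ = supp σ`, then the
limit inferior of `D_α(ρ‖σ)` as `α → 0` through `α ∈ (0,1)` is at least `- log (tr σ)`, and
hence at least `D̃₀(ρ‖σ)`. -/
theorem liminf_renyiDiv_ge {n : ℕ} (ρ σ : Matrix (Fin n) (Fin n) ℂ)
    (hρ : ρ.PosSemidef) (hρtr : ρ.trace = 1) (hσ : σ.PosSemidef)
    (hsupp : msupp ρ = msupp σ) :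
    - Real.log (σ.trace.re) ≤
        Filter.liminf (fun α : ℝ => renyiDiv ρ σ α) (nhdsWithin (0 : ℝ) (Set.Ioo (0 : ℝ) 1)) ∧
      relRenyi0 ρ σ ≤
        Filter.liminf (fun α : ℝ => renyiDiv ρ σ α) (nhdsWithin (0 : ℝ) (Set.Ioo (0 : ℝ) 1)) := by
  -- `liminf_eq` needs the filter to be proper: `0` is a limit point of `(0, 1)`.
  have : (nhdsWithin (0 : ℝ) (Set.Ioo (0 : ℝ) 1)).NeBot := by
    rw [nhdsWithin_Ioo_eq_nhdsGT one_pos]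
    infer_instance
  rw [(tendsto_renyiDiv ρ σ hρ hρtr hσ hsupp).liminf_eq, relRenyi0,
    suppProj_mul_of_msupp_le hρ.isHermitian hsupp.ge]
  exact ⟨le_rfl, le_rfl⟩
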